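/- arXiv:1806.03920 — 5 statements merged into one kernel-verified Lean document; each statement's English description precedes it below -/
import Mathlib

section
/- Let n ≥ 1 and let T₁,…,Tₙ : H → Set H be maximal monotone operators on a real Hilbert space H. Then the extended solution set S = {(z, w₁, …, w_{n−1}) ∈ Hⁿ : w_i ∈ T_i z for i = 1,…,n−1, and −(w₁ + ⋯ + w_{n−1}) ∈ Tₙ z} is a closed and convex subset of Hⁿ. -/
open scoped RealInnerProductSpace

/-- A set-valued operator `T : H → Set H` is monotone. -/
def IsMonotoneOp {H : Type*} [NormedAddCommGroup H] [InnerProductSpace ℝ H]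
    (T : H → Set H) : Prop :=
  ∀ x x' y y', y ∈ T x → y' ∈ T x' → 0 ≤ ⟪x - x', y - y'⟫

/-- A set-valued operator is maximal monotone: it is monotone and its graph is not
properly contained in the graph of any other monotone operator. -/
def IsMaximalMonotoneOp {H : Type*} [NormedAddCommGroup H] [InnerProductSpace ℝ H]
    (T : H → Set H) : Prop :=
  IsMonotoneOp T ∧ ∀ T' : H → Set H, IsMonotoneOp T' →
    (∀ x y, y ∈ T x → y ∈ T' x) → ∀ x y, y ∈ T' x → y ∈ T x

/-!
If `∑ i, w i = 0`, then for points `(x i, y i)` of the graphs of the `T i` the quadratic terms of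
`∑ i, ⟪z - x i, w i - y i⟫` cancel, so its nonnegativity cuts out a closed half-space of pairs
`(z, w)`. By maximality, the intersection of these half-spaces with the subspace `∑ i, w i = 0` is
exactly the extended solution set: if `w i ∉ T i z`, then some point of the graph of `T i` makes
the `i`-th term negative, and all other terms can be made nonpositive.
-/

/-- The extended solution set of the inclusion `0 ∈ ∑ i, T i z` in symmetric form: all the `w i`
are coordinates, and the constraint `∑ i, w i = 0` replaces the elimination of the last one. -/
def extendedSolutionSet {M ι : Type*} [AddCommMonoid M] [Fintype ι] (T : ι → M → Set M) :
    Set (M × (ι → M)) :=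
  {p | ∑ i, p.2 i = 0 ∧ ∀ i, p.2 i ∈ T i p.1}

section

variable {H ι : Type*} [NormedAddCommGroup H] [InnerProductSpace ℝ H]

namespace IsMaximalMonotoneOp

theorem mem_iff_forall_inner_nonneg {T : H → Set H} (hT : IsMaximalMonotoneOp T) {x y : H} :
    y ∈ T x ↔ ∀ x' y', y' ∈ T x' → 0 ≤ ⟪x - x', y - y'⟫ := by
  refine ⟨fun hy x' y' hy' ↦ hT.1 x x' y y' hy hy', fun hxy ↦ ?_⟩
  let T' : H → Set H := fun a ↦ {b | b ∈ T a ∨ (a = x ∧ b = y)}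
  have hT' : IsMonotoneOp T' := by
    rintro a a' b b' (hb | ⟨rfl, rfl⟩) (hb' | ⟨rfl, rfl⟩)
    · exact hT.1 a a' b b' hb hb'
    · rw [← inner_neg_neg, neg_sub, neg_sub]
      exact hxy a b hb
    · exact hxy a' b' hb'
    · simp
  exact hT.2 T' hT' (fun _ _ ↦ Or.inl) x y (Or.inr ⟨rfl, rfl⟩)

theorem exists_inner_nonpos {T : H → Set H} (hT : IsMaximalMonotoneOp T) (x y : H) :
    ∃ x' y', y' ∈ T x' ∧ ⟪x - x', y - y'⟫ ≤ 0 ∧ (⟪x - x', y - y'⟫ = 0 → y ∈ T x) := by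
  by_cases hy : y ∈ T x
  · exact ⟨x, y, hy, by simp, fun _ ↦ hy⟩
  · obtain ⟨x', y', hy', hneg⟩ : ∃ x' y', y' ∈ T x' ∧ ⟪x - x', y - y'⟫ < 0 := by
      simpa using mt hT.mem_iff_forall_inner_nonneg.2 hy
    exact ⟨x', y', hy', hneg.le, fun h ↦ absurd h hneg.ne⟩

theorem forall_mem_iff_forall_sum_inner_nonneg [Fintype ι] {T : ι → H → Set H}
    (hT : ∀ i, IsMaximalMonotoneOp (T i)) {x y : ι → H} :
    (∀ i, y i ∈ T i (x i)) ↔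
      ∀ x' y' : ι → H, (∀ i, y' i ∈ T i (x' i)) → 0 ≤ ∑ i, ⟪x i - x' i, y i - y' i⟫ := by
  refine ⟨fun hy x' y' hy' ↦ Finset.sum_nonneg fun i _ ↦
    (hT i).1 _ _ _ _ (hy i) (hy' i), fun hsum ↦ ?_⟩
  choose x' y' hy' hnonpos hmem using fun i ↦ (hT i).exists_inner_nonpos (x i) (y i)
  have hzero : ∑ i, ⟪x i - x' i, y i - y' i⟫ = 0 :=
    (Finset.sum_nonpos fun i _ ↦ hnonpos i).antisymm (hsum x' y' hy')
  exact fun i ↦ hmem i <|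
    (Finset.sum_eq_zero_iff_of_nonpos fun i _ ↦ hnonpos i).1 hzero i (Finset.mem_univ i)

end IsMaximalMonotoneOp

variable [Fintype ι]

/-- The linear part of the Eckstein–Svaiter separator `(z, w) ↦ ∑ i, ⟪z - x i, y i - w i⟫`, which
is affine on the subspace `∑ i, w i = 0`. -/
noncomputable def separator (x y : ι → H) : H × (ι → H) →L[ℝ] ℝ :=
  (innerSL ℝ (∑ i, y i)).coprod (∑ i, innerSL ℝ (x i) ∘L ContinuousLinearMap.proj i)

theorem separator_apply (x y : ι → H) (p : H × (ι → H)) :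
    separator x y p = ⟪∑ i, y i, p.1⟫ + ∑ i, ⟪x i, p.2 i⟫ := by
  simp [separator, sum_inner]

theorem sum_inner_sub_sub_eq_sub_separator (x y : ι → H) {p : H × (ι → H)}
    (hp : ∑ i, p.2 i = 0) :
    ∑ i, ⟪p.1 - x i, p.2 i - y i⟫ = ∑ i, ⟪x i, y i⟫ - separator x y p := by
  have hquad : ∑ i, ⟪p.1, p.2 i⟫ = 0 := by rw [← inner_sum, hp, inner_zero_right]
  simp only [separator_apply, inner_sub_left, inner_sub_right, Finset.sum_sub_distrib, hquad,
    real_inner_comm p.1, inner_sum]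
  ring

variable {T : ι → H → Set H}

theorem extendedSolutionSet_eq_inter_halfSpaces (hT : ∀ i, IsMaximalMonotoneOp (T i)) :
    extendedSolutionSet T = {p | ∑ i, p.2 i = 0} ∩
      ⋂ (x : ι → H) (y : ι → H) (_ : ∀ i, y i ∈ T i (x i)),
        {p | separator x y p ≤ ∑ i, ⟪x i, y i⟫} := by
  ext p
  simp only [extendedSolutionSet, Set.mem_inter_iff, Set.mem_ofPred_eq, Set.mem_iInter]
  refine and_congr_right fun hp ↦ ?_
  simp only [IsMaximalMonotoneOp.forall_mem_iff_forall_sum_inner_nonneg hT (x := fun _ ↦ p.1),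
    sum_inner_sub_sub_eq_sub_separator _ _ hp, sub_nonneg]

theorem isClosed_extendedSolutionSet (hT : ∀ i, IsMaximalMonotoneOp (T i)) :
    IsClosed (extendedSolutionSet T) := by
  rw [extendedSolutionSet_eq_inter_halfSpaces hT]
  refine (isClosed_eq (by fun_prop) continuous_const).inter ?_
  exact isClosed_iInter fun x ↦ isClosed_iInter fun y ↦ isClosed_iInter fun _ ↦
    isClosed_le (separator x y).continuous continuous_const

theorem convex_extendedSolutionSet (hT : ∀ i, IsMaximalMonotoneOp (T i)) :
    Convex ℝ (extendedSolutionSet T) := by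
  rw [extendedSolutionSet_eq_inter_halfSpaces hT]
  have hzero : Convex ℝ {p : H × (ι → H) | ∑ i, p.2 i = 0} := by
    have hsum : IsLinearMap ℝ fun p : H × (ι → H) ↦ ∑ i, p.2 i :=
      ⟨by simp [Finset.sum_add_distrib], by simp [Finset.smul_sum]⟩
    exact (convex_singleton 0).is_linear_preimage hsum
  refine hzero.inter ?_
  exact convex_iInter fun x ↦ convex_iInter fun y ↦ convex_iInter fun _ ↦
    convex_halfSpace_le (separator x y).isLinear _

end

section

variable (R M : Type*) [Semiring R] [AddCommGroup M] [Module R M] [TopologicalSpace M]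
  [IsTopologicalAddGroup M] (m : ℕ)

/-- The map `(z, w) ↦ (z, (w, -∑ i, w i))`, which restores the eliminated last coordinate of a
tuple with sum zero. -/
def snocNegSum : M × (Fin m → M) →L[R] M × (Fin (m + 1) → M) where
  toFun p := (p.1, Fin.snoc p.2 (-∑ i, p.2 i))
  map_add' p q := by
    ext i
    · rfl
    · induction i using Fin.lastCases <;> simp [Finset.sum_add_distrib, add_comm]
  map_smul' c p := by
    ext i
    · rfl
    · induction i using Fin.lastCases <;> simp [Finset.smul_sum]
  cont := by fun_prop

theorem snocNegSum_preimage_extendedSolutionSet (T : Fin (m + 1) → M → Set M) :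
    snocNegSum R M m ⁻¹' extendedSolutionSet T =
      {p | (∀ i : Fin m, p.2 i ∈ T i.castSucc p.1) ∧ -(∑ i, p.2 i) ∈ T (Fin.last m) p.1} := by
  ext p
  simp [snocNegSum, extendedSolutionSet, Fin.sum_univ_castSucc, Fin.forall_fin_succ']

end

theorem extended_solution_set_closed_convex_general
    {H : Type*} [NormedAddCommGroup H] [InnerProductSpace ℝ H]
    (m : ℕ) (T : Fin (m + 1) → H → Set H) (hT : ∀ i, IsMaximalMonotoneOp (T i)) :
    IsClosed {p : H × (Fin m → H) |
        (∀ i : Fin m, p.2 i ∈ T i.castSucc p.1) ∧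
        -(∑ i : Fin m, p.2 i) ∈ T (Fin.last m) p.1} ∧
    Convex ℝ {p : H × (Fin m → H) |
        (∀ i : Fin m, p.2 i ∈ T i.castSucc p.1) ∧
        -(∑ i : Fin m, p.2 i) ∈ T (Fin.last m) p.1} := by
  rw [← snocNegSum_preimage_extendedSolutionSet ℝ H m T]
  exact ⟨(isClosed_extendedSolutionSet hT).preimage (snocNegSum ℝ H m).continuous,
    (convex_extendedSolutionSet hT).linear_preimage (snocNegSum ℝ H m).toLinearMap⟩

/-- For maximal monotone operators `T 0, …, T m` (so `n = m + 1 ≥ 1`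
operators) on a real Hilbert space `H`, the extended solution set
`S = {(z, w₁, …, w_{n−1}) : wᵢ ∈ Tᵢ z (i = 1,…,n−1), −(w₁+⋯+w_{n−1}) ∈ Tₙ z}`
is a closed and convex subset of `Hⁿ = H × (Fin m → H)`. -/
theorem extended_solution_set_closed_convex
    {H : Type*} [NormedAddCommGroup H] [InnerProductSpace ℝ H] [CompleteSpace H]
    (m : ℕ) (T : Fin (m+1) → H → Set H)
    (hT : ∀ i, IsMaximalMonotoneOp (T i)) :
    IsClosed {p : H × (Fin m → H) |
        (∀ i : Fin m, p.2 i ∈ T i.castSucc p.1) ∧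
        -(∑ i : Fin m, p.2 i) ∈ T (Fin.last m) p.1} ∧
    Convex ℝ {p : H × (Fin m → H) |
        (∀ i : Fin m, p.2 i ∈ T i.castSucc p.1) ∧
        -(∑ i : Fin m, p.2 i) ∈ T (Fin.last m) p.1} :=
  extended_solution_set_closed_convex_general m T hT
end

section
/- Let K be a real Hilbert space and p* ∈ K. For each t = 1,…,k let g_t ∈ K with g_t ≠ 0, c_t ∈ ℝ, φ_t(p) = ⟨g_t, p⟩ + c_t, and suppose φ_t(p*) ≤ 0 ≤ φ_t(p^t), β_t ∈ [β̲, β̄] with 0 < β̲ ≤ β̄ < 2, and p^{t+1} = p^t − β_t (φ_t(p^t)/‖g_t‖²) g_t. Then Σ_{t=1}^{k} ‖p^{t+1} − p^t‖² ≤ (β̄/(2−β̄)) ‖p¹ − p*‖², and ‖p^{t} − p*‖ ≤ ‖p¹ − p*‖ for every t = 1,…,k+1. -/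
open scoped RealInnerProductSpace

/-! Let `y` be the projection of `x` onto a halfspace containing `z`, so that the angle at `y`
between `x` and `z` is not acute. Moving from `x` the fraction `β` of the way to `y` decreases the
squared distance to `z` by at least `β (2 - β) ‖x - y‖²`, while the squared displacement is
`β² ‖x - y‖²`. The ratio of the latter to the former, `β / (2 - β)`, increases with `β < 2`, so the
squared displacements are dominated by a telescoping sum. -/

open AffineMap (lineMap)

section RelaxedStep

variable {E : Type*} [SeminormedAddCommGroup E] [InnerProductSpace ℝ E] {x y z : E} {b β : ℝ}

lemma norm_lineMap_sub_sq (x y z : E) (β : ℝ) :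
    ‖lineMap x y β - z‖ ^ 2 =
      ‖x - z‖ ^ 2 - β * (2 - β) * ‖x - y‖ ^ 2 + 2 * β * ⟪x - y, z - y⟫ := by
  have step_eq : lineMap x y β - z = (x - z) - β • (x - y) := by
    rw [AffineMap.lineMap_apply_module']
    module
  have inner_eq : ⟪x - z, x - y⟫ = ‖x - y‖ ^ 2 - ⟪x - y, z - y⟫ := by
    rw [← sub_sub_sub_cancel_right x z y, inner_sub_left, real_inner_self_eq_norm_sq,
      real_inner_comm]
  rw [step_eq, norm_sub_sq_real, inner_smul_right, inner_eq, norm_smul, mul_pow,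
    Real.norm_eq_abs, sq_abs]
  ring

lemma norm_lineMap_sub_sq_le_of_inner_nonpos (hβ : 0 ≤ β) (hxyz : ⟪x - y, z - y⟫ ≤ 0) :
    ‖lineMap x y β - z‖ ^ 2 ≤ ‖x - z‖ ^ 2 - β * (2 - β) * ‖x - y‖ ^ 2 := by
  rw [norm_lineMap_sub_sq]
  exact add_le_of_nonpos_right (mul_nonpos_of_nonneg_of_nonpos (by positivity) hxyz)

lemma norm_lineMap_sub_le_of_inner_nonpos (hβ : β ∈ Set.Icc 0 2) (hxyz : ⟪x - y, z - y⟫ ≤ 0) :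
    ‖lineMap x y β - z‖ ≤ ‖x - z‖ := by
  have decrease_nonneg : 0 ≤ β * (2 - β) * ‖x - y‖ ^ 2 :=
    mul_nonneg (mul_nonneg hβ.1 (sub_nonneg.2 hβ.2)) (sq_nonneg _)
  exact (sq_le_sq₀ (norm_nonneg _) (norm_nonneg _)).1 <|
    (norm_lineMap_sub_sq_le_of_inner_nonpos hβ.1 hxyz).trans (sub_le_self _ decrease_nonneg)

lemma norm_lineMap_sub_left_sq_le_of_inner_nonpos (hβ : β ∈ Set.Icc 0 b) (hb : b < 2)
    (hxyz : ⟪x - y, z - y⟫ ≤ 0) :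
    ‖lineMap x y β - x‖ ^ 2 ≤ b / (2 - b) * (‖x - z‖ ^ 2 - ‖lineMap x y β - z‖ ^ 2) := by
  obtain ⟨hβ₀, hβb⟩ := hβ
  have two_sub_pos : 0 < 2 - b := sub_pos.2 hb
  have ratio_le : β ^ 2 ≤ b / (2 - b) * (β * (2 - β)) := by
    rw [div_mul_eq_mul_div, le_div_iff₀ two_sub_pos]
    nlinarith [mul_nonneg hβ₀ (sub_nonneg.2 hβb)]
  calc ‖lineMap x y β - x‖ ^ 2 = β ^ 2 * ‖x - y‖ ^ 2 := by
        rw [← dist_eq_norm, dist_lineMap_left, dist_eq_norm, mul_pow, Real.norm_eq_abs, sq_abs]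
    _ ≤ b / (2 - b) * (β * (2 - β)) * ‖x - y‖ ^ 2 := by gcongr
    _ = b / (2 - b) * (β * (2 - β) * ‖x - y‖ ^ 2) := mul_assoc _ _ _
    _ ≤ b / (2 - b) * (‖x - z‖ ^ 2 - ‖lineMap x y β - z‖ ^ 2) :=
        mul_le_mul_of_nonneg_left
          (le_sub_comm.1 (norm_lineMap_sub_sq_le_of_inner_nonpos hβ₀ hxyz))
          (div_nonneg (hβ₀.trans hβb) two_sub_pos.le)

end RelaxedStep

section RelaxedSequence

variable {E : Type*} [SeminormedAddCommGroup E] [InnerProductSpace ℝ E] {z : E} {p y : ℕ → E}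
  {β : ℕ → ℝ} {b : ℝ} {m n : ℕ}

lemma antitoneOn_norm_sub_of_lineMap (hβ : ∀ t ∈ Set.Ico m n, β t ∈ Set.Icc 0 2)
    (hy : ∀ t ∈ Set.Ico m n, ⟪p t - y t, z - y t⟫ ≤ 0)
    (hp : ∀ t ∈ Set.Ico m n, p (t + 1) = lineMap (p t) (y t) (β t)) :
    AntitoneOn (fun t ↦ ‖p t - z‖) (Set.Icc m n) := by
  refine antitoneOn_of_add_one_le Set.ordConnected_Icc fun t _ ht ht' ↦ ?_
  have ht_mem : t ∈ Set.Ico m n := ⟨ht.1, ht'.2⟩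
  simpa only [hp t ht_mem] using
    norm_lineMap_sub_le_of_inner_nonpos (hβ t ht_mem) (hy t ht_mem)

lemma sum_norm_sub_sq_le_of_lineMap (hmn : m ≤ n) (hβ : ∀ t ∈ Set.Ico m n, β t ∈ Set.Icc 0 b)
    (hb : b < 2) (hy : ∀ t ∈ Set.Ico m n, ⟪p t - y t, z - y t⟫ ≤ 0)
    (hp : ∀ t ∈ Set.Ico m n, p (t + 1) = lineMap (p t) (y t) (β t)) :
    ∑ t ∈ Finset.Ico m n, ‖p (t + 1) - p t‖ ^ 2 ≤
      b / (2 - b) * (‖p m - z‖ ^ 2 - ‖p n - z‖ ^ 2) := by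
  calc ∑ t ∈ Finset.Ico m n, ‖p (t + 1) - p t‖ ^ 2
      ≤ ∑ t ∈ Finset.Ico m n, b / (2 - b) * (‖p t - z‖ ^ 2 - ‖p (t + 1) - z‖ ^ 2) := by
        refine Finset.sum_le_sum fun t ht ↦ ?_
        rw [← Finset.mem_coe, Finset.coe_Ico] at ht
        rw [hp t ht]
        exact norm_lineMap_sub_left_sq_le_of_inner_nonpos (hβ t ht) hb (hy t ht)
    _ = b / (2 - b) * (‖p m - z‖ ^ 2 - ‖p n - z‖ ^ 2) := by
        rw [← Finset.mul_sum]
        congr 1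
        simpa only [neg_sub_neg] using Finset.sum_Ico_sub (fun t ↦ -‖p t - z‖ ^ 2) hmn

end RelaxedSequence

section HyperplaneProj

variable {E : Type*} [SeminormedAddCommGroup E] [InnerProductSpace ℝ E]

/-- The orthogonal projection of `x` onto the hyperplane `{q | ⟪g, q⟫ + c = 0}`, which for
`0 ≤ ⟪g, x⟫ + c` is also its projection onto the halfspace `{q | ⟪g, q⟫ + c ≤ 0}`. The value is `x`
when `‖g‖ = 0`. -/
noncomputable def hyperplaneProj (g : E) (c : ℝ) (x : E) : E :=
  x - ((⟪g, x⟫ + c) / ‖g‖ ^ 2) • g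

lemma inner_hyperplaneProj_add {g : E} (hg : ‖g‖ ≠ 0) (c : ℝ) (x : E) :
    ⟪g, hyperplaneProj g c x⟫ + c = 0 := by
  rw [hyperplaneProj, inner_sub_right, inner_smul_right, real_inner_self_eq_norm_sq,
    div_mul_cancel₀ _ (pow_ne_zero 2 hg)]
  ring

lemma inner_sub_hyperplaneProj_nonpos {g x z : E} {c : ℝ} (hg : ‖g‖ ≠ 0)
    (hx : 0 ≤ ⟪g, x⟫ + c) (hz : ⟪g, z⟫ + c ≤ 0) :
    ⟪x - hyperplaneProj g c x, z - hyperplaneProj g c x⟫ ≤ 0 := by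
  have inner_nonpos : ⟪g, z - hyperplaneProj g c x⟫ ≤ 0 := by
    rw [inner_sub_right]
    linarith [inner_hyperplaneProj_add hg c x]
  have sub_eq : x - hyperplaneProj g c x = ((⟪g, x⟫ + c) / ‖g‖ ^ 2) • g := sub_sub_cancel _ _
  rw [sub_eq, real_inner_smul_left]
  exact mul_nonpos_of_nonneg_of_nonpos (by positivity) inner_nonpos

lemma lineMap_hyperplaneProj (g : E) (c : ℝ) (x : E) (β : ℝ) :
    lineMap x (hyperplaneProj g c x) β = x - (β * ((⟪g, x⟫ + c) / ‖g‖ ^ 2)) • g := by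
  rw [AffineMap.lineMap_apply_module', hyperplaneProj]
  module

end HyperplaneProj

theorem relaxed_projection_sequence_summable_general
    {K : Type*} [SeminormedAddCommGroup K] [InnerProductSpace ℝ K]
    (k : ℕ) (pstar : K)
    (g : ℕ → K) (c : ℕ → ℝ) (φ : ℕ → K → ℝ) (p : ℕ → K) (β : ℕ → ℝ)
    (βhi : ℝ) (hβhi₀ : 0 ≤ βhi) (hβhi : βhi < 2)
    (hg : ∀ t, 1 ≤ t → t ≤ k → ‖g t‖ ≠ 0)
    (hφ : ∀ t, 1 ≤ t → t ≤ k → ∀ q, φ t q = ⟪g t, q⟫ + c t)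
    (hsep : ∀ t, 1 ≤ t → t ≤ k → φ t pstar ≤ 0 ∧ 0 ≤ φ t (p t))
    (hβ : ∀ t, 1 ≤ t → t ≤ k → 0 ≤ β t ∧ β t ≤ βhi)
    (hupd : ∀ t, 1 ≤ t → t ≤ k →
      p (t + 1) = p t - (β t * (φ t (p t) / ‖g t‖ ^ 2)) • g t) :
    (∑ t ∈ Finset.Icc 1 k, ‖p (t + 1) - p t‖ ^ 2 ≤ (βhi / (2 - βhi)) * ‖p 1 - pstar‖ ^ 2) ∧
    (∀ t, 1 ≤ t → t ≤ k + 1 → ‖p t - pstar‖ ≤ ‖p 1 - pstar‖) := by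
  let y t := hyperplaneProj (g t) (c t) (p t)
  have relaxation_mem : ∀ t ∈ Set.Ico 1 (k + 1), β t ∈ Set.Icc 0 βhi :=
    fun t ht ↦ hβ t ht.1 (Nat.le_of_lt_succ ht.2)
  have obtuse : ∀ t ∈ Set.Ico 1 (k + 1), ⟪p t - y t, pstar - y t⟫ ≤ 0 := by
    rintro t ⟨h1, hk⟩
    have hk := Nat.le_of_lt_succ hk
    obtain ⟨hstar, hpt⟩ := hsep t h1 hk
    rw [hφ t h1 hk] at hstar hpt
    exact inner_sub_hyperplaneProj_nonpos (hg t h1 hk) hpt hstar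
  have step_eq : ∀ t ∈ Set.Ico 1 (k + 1), p (t + 1) = lineMap (p t) (y t) (β t) := by
    rintro t ⟨h1, hk⟩
    have hk := Nat.le_of_lt_succ hk
    rw [lineMap_hyperplaneProj, hupd t h1 hk, hφ t h1 hk]
  constructor
  · have sum_le := sum_norm_sub_sq_le_of_lineMap (Nat.le_add_left 1 k) relaxation_mem hβhi
      obtuse step_eq
    rw [Finset.Ico_add_one_right_eq_Icc] at sum_le
    exact sum_le.trans <| mul_le_mul_of_nonneg_left (sub_le_self _ (sq_nonneg _))
      (div_nonneg hβhi₀ (sub_pos.2 hβhi).le)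
  · have fejer := antitoneOn_norm_sub_of_lineMap
      (fun t ht ↦ Set.Icc_subset_Icc_right hβhi.le (relaxation_mem t ht)) obtuse step_eq
    exact fun t h1 ht ↦ fejer (Set.left_mem_Icc.2 (Nat.le_add_left 1 k)) ⟨h1, ht⟩ h1

/-- Iterated relaxed projections onto halfspaces separating the current
point from `p*`: the successive displacements are square-summable with
`∑_{t=1}^k ‖p^{t+1} − p^t‖² ≤ (β̄/(2−β̄)) ‖p¹ − p*‖²`, and the iterates are Fejér
monotone: `‖p^t − p*‖ ≤ ‖p¹ − p*‖` for `t = 1,…,k+1`. -/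
theorem relaxed_projection_sequence_summable
    {K : Type*} [NormedAddCommGroup K] [InnerProductSpace ℝ K] [CompleteSpace K]
    (k : ℕ) (hk : 1 ≤ k) (pstar : K)
    (g : ℕ → K) (c : ℕ → ℝ) (φ : ℕ → K → ℝ) (p : ℕ → K) (β : ℕ → ℝ)
    (βlo βhi : ℝ) (hβlo : 0 < βlo) (hβle : βlo ≤ βhi) (hβhi : βhi < 2)
    (hg : ∀ t, 1 ≤ t → t ≤ k → g t ≠ 0)
    (hφ : ∀ t, 1 ≤ t → t ≤ k → ∀ q, φ t q = ⟪g t, q⟫ + c t)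
    (hsep : ∀ t, 1 ≤ t → t ≤ k → φ t pstar ≤ 0 ∧ 0 ≤ φ t (p t))
    (hβ : ∀ t, 1 ≤ t → t ≤ k → βlo ≤ β t ∧ β t ≤ βhi)
    (hupd : ∀ t, 1 ≤ t → t ≤ k →
      p (t+1) = p t - (β t * (φ t (p t) / ‖g t‖ ^ 2)) • g t) :
    (∑ t ∈ Finset.Icc 1 k, ‖p (t+1) - p t‖ ^ 2 ≤ (βhi / (2 - βhi)) * ‖p 1 - pstar‖ ^ 2) ∧
    (∀ t, 1 ≤ t → t ≤ k + 1 → ‖p t - pstar‖ ≤ ‖p 1 - pstar‖) :=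
  relaxed_projection_sequence_summable_general k pstar g c φ p β βhi (hβlo.le.trans hβle) hβhi
    (fun t h1 hk ↦ norm_ne_zero_iff.2 (hg t h1 hk)) hφ hsep
    (fun t h1 hk ↦ (hβ t h1 hk).imp_left hβlo.le.trans) hupd
end

section
/- Under the hypotheses of one iteration of projective splitting at (z, w₁,…,w_{n−1}) with wₙ = −(w₁+⋯+w_{n−1}), one has γ⁻¹‖y₁ + ⋯ + yₙ‖² + Σ_{i=1}^{n−1} ‖x_i − x_n‖² ≤ ξ₁ Σ_{i=1}^{n} ‖z − x_i‖², where ξ₁ = 2n[1 + 2γ⁻¹(L̄²|F| + ρ̲⁻²(1+δ))]. (The left-hand side equals the squared γ-weighted norm of the gradient of the separator function.) -/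
open scoped RealInnerProductSpace

/-!
Since `∑ i, w i = 0`, the dual component `∑ i, y i` of the gradient equals `∑ i, (y i - w i)`. A
backward step gives `ρ i • (y i - w i) = (z - x i) + e i`, and two forward steps give
`y i - w i = (T (x i) - T z) + (ρ i)⁻¹ • (z - x i)`; in both cases `y i - w i` is bounded in
norm by a multiple of `‖z - x i‖`. The primal components are bounded through
`x i - x n = (x i - z) + (z - x n)`.
-/

section SeminormedAddCommGroup

variable {ι H : Type*} [SeminormedAddCommGroup H]

lemma norm_add_sq_le_two_mul (u v : H) : ‖u + v‖ ^ 2 ≤ 2 * (‖u‖ ^ 2 + ‖v‖ ^ 2) :=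
  calc ‖u + v‖ ^ 2 ≤ (‖u‖ + ‖v‖) ^ 2 := by gcongr; exact norm_add_le u v
    _ ≤ 2 * (‖u‖ ^ 2 + ‖v‖ ^ 2) := add_sq_le

lemma norm_sum_sq_le_card_mul_sum (s : Finset ι) (f : ι → H) :
    ‖∑ i ∈ s, f i‖ ^ 2 ≤ s.card * ∑ i ∈ s, ‖f i‖ ^ 2 :=
  calc ‖∑ i ∈ s, f i‖ ^ 2 ≤ (∑ i ∈ s, ‖f i‖) ^ 2 := by gcongr; exact norm_sum_le s f
    _ ≤ s.card * ∑ i ∈ s, ‖f i‖ ^ 2 := sq_sum_le_card_mul_sum_sq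

lemma norm_sum_sq_le_of_norm_sub_sq_le {s : Finset ι} {w y : ι → H} {d : ι → ℝ} {C : ℝ}
    (hw : ∑ i ∈ s, w i = 0) (h : ∀ i ∈ s, ‖y i - w i‖ ^ 2 ≤ C * d i) :
    ‖∑ i ∈ s, y i‖ ^ 2 ≤ s.card * (C * ∑ i ∈ s, d i) :=
  calc ‖∑ i ∈ s, y i‖ ^ 2 = ‖∑ i ∈ s, (y i - w i)‖ ^ 2 := by
        rw [Finset.sum_sub_distrib, hw, sub_zero]
    _ ≤ s.card * ∑ i ∈ s, ‖y i - w i‖ ^ 2 := norm_sum_sq_le_card_mul_sum s _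
    _ ≤ s.card * (C * ∑ i ∈ s, d i) := by
        rw [Finset.mul_sum s d]
        gcongr with i hi
        exact h i hi

lemma norm_sub_sq_le_two_mul_sum {s : Finset ι} {i j : ι} (hi : i ∈ s) (hj : j ∈ s) (hij : i ≠ j)
    (z : H) (x : ι → H) : ‖x i - x j‖ ^ 2 ≤ 2 * ∑ k ∈ s, ‖z - x k‖ ^ 2 :=
  calc ‖x i - x j‖ ^ 2 = ‖(x i - z) + (z - x j)‖ ^ 2 := by rw [sub_add_sub_cancel]
    _ ≤ 2 * (‖z - x i‖ ^ 2 + ‖z - x j‖ ^ 2) := by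
        rw [norm_sub_rev z (x i)]
        exact norm_add_sq_le_two_mul _ _
    _ ≤ 2 * ∑ k ∈ s, ‖z - x k‖ ^ 2 := by
        gcongr
        exact Finset.add_le_sum (f := fun k => ‖z - x k‖ ^ 2) (fun _ _ => sq_nonneg _) hi hj hij

end SeminormedAddCommGroup

section Steps

variable {H : Type*} [SeminormedAddCommGroup H] [NormedSpace ℝ H] {r r₀ : ℝ}

lemma norm_sq_le_norm_smul_sq_div (hr₀ : 0 < r₀) (hr : r₀ ≤ r) (u : H) :
    ‖u‖ ^ 2 ≤ ‖r • u‖ ^ 2 / r₀ ^ 2 := by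
  rw [le_div_iff₀ (by positivity), norm_smul, Real.norm_of_nonneg (hr₀.le.trans hr), mul_pow,
    mul_comm]
  gcongr

lemma norm_sub_sq_le_of_backward_step {x y z w e : H} {δ : ℝ} (hr₀ : 0 < r₀) (hr : r₀ ≤ r)
    (hstep : x + r • y = z + r • w + e) (he : ‖e‖ ^ 2 ≤ δ * ‖z - x‖ ^ 2) :
    ‖y - w‖ ^ 2 ≤ 2 * ((1 + δ) / r₀ ^ 2) * ‖z - x‖ ^ 2 := by
  have hsmul : r • (y - w) = (z - x) + e := by
    rw [smul_sub, eq_sub_of_add_eq' hstep]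
    abel
  calc ‖y - w‖ ^ 2 ≤ ‖(z - x) + e‖ ^ 2 / r₀ ^ 2 := hsmul ▸ norm_sq_le_norm_smul_sq_div hr₀ hr _
    _ ≤ 2 * (‖z - x‖ ^ 2 + δ * ‖z - x‖ ^ 2) / r₀ ^ 2 := by
        gcongr
        exact (norm_add_sq_le_two_mul _ _).trans (by gcongr)
    _ = 2 * ((1 + δ) / r₀ ^ 2) * ‖z - x‖ ^ 2 := by ring

lemma norm_sub_sq_le_of_forward_step {T : H → H} {x z w : H} {K : ℝ} (hr₀ : 0 < r₀) (hr : r₀ ≤ r)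
    (hT : ‖T x - T z‖ ≤ K * ‖x - z‖) (hx : x = z - r • (T z - w)) :
    ‖T x - w‖ ^ 2 ≤ 2 * (K ^ 2 + 1 / r₀ ^ 2) * ‖z - x‖ ^ 2 := by
  have hsmul : r • (T z - w) = z - x := by rw [hx, sub_sub_cancel]
  have hTz : ‖T z - w‖ ^ 2 ≤ ‖z - x‖ ^ 2 / r₀ ^ 2 := hsmul ▸ norm_sq_le_norm_smul_sq_div hr₀ hr _
  calc ‖T x - w‖ ^ 2 = ‖(T x - T z) + (T z - w)‖ ^ 2 := by rw [sub_add_sub_cancel]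
    _ ≤ 2 * (‖T x - T z‖ ^ 2 + ‖T z - w‖ ^ 2) := norm_add_sq_le_two_mul _ _
    _ ≤ 2 * ((K * ‖z - x‖) ^ 2 + ‖z - x‖ ^ 2 / r₀ ^ 2) := by
        rw [norm_sub_rev x z] at hT
        gcongr
    _ = 2 * (K ^ 2 + 1 / r₀ ^ 2) * ‖z - x‖ ^ 2 := by ring

end Steps

section MaxOverSubset

variable {ι : Type*} [Fintype ι] [Nonempty ι] [DecidableEq ι] {F : Finset ι} {L : ι → ℝ} {M : ℝ}

lemma le_sup'_ite_zero (hM : M = Finset.univ.sup' Finset.univ_nonempty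
    fun i => if i ∈ F then L i else 0) {i : ι} (hi : i ∈ F) : L i ≤ M := by
  rw [hM, Finset.le_sup'_iff]
  exact ⟨i, Finset.mem_univ i, by rw [if_pos hi]⟩

lemma sq_sup'_ite_zero_le_mul_card (hM : M = Finset.univ.sup' Finset.univ_nonempty
    fun i => if i ∈ F then L i else 0) : M ^ 2 ≤ M ^ 2 * F.card := by
  rcases F.eq_empty_or_nonempty with rfl | hF
  · have hM0 : M = 0 := by simpa only [Finset.notMem_empty, if_false, Finset.sup'_const] using hM
    simp [hM0]
  · exact le_mul_of_one_le_right (sq_nonneg M) (mod_cast hF.card_pos)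

end MaxOverSubset

theorem gradient_bound_one_iteration_general
    {H : Type*} [SeminormedAddCommGroup H] [NormedSpace ℝ H]
    {m : ℕ} {γ : ℝ} (hγ : 0 < γ) {B F : Finset (Fin (m + 1))} (hBF : B ∪ F = Finset.univ)
    {T : Fin (m + 1) → H → H} {K : ℝ}
    (hLip : ∀ i ∈ F, ∀ u v : H, ‖T i u - T i v‖ ≤ K * ‖u - v‖)
    {z : H} {w x y e : Fin (m + 1) → H} (hw : ∑ i, w i = 0)
    {ρ : Fin (m + 1) → ℝ} {ρlo δ : ℝ} (hδ : 0 ≤ δ) (hρlo : 0 < ρlo) (hρ : ∀ i, ρlo ≤ ρ i)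
    (hback : ∀ i ∈ B, x i + ρ i • y i = z + ρ i • w i + e i)
    (hforw : ∀ i ∈ F, x i = z - ρ i • (T i z - w i) ∧ y i = T i (x i))
    (herr : ∀ i ∈ B, ‖e i‖ ^ 2 ≤ δ * ‖z - x i‖ ^ 2) :
    (1 / γ) * ‖∑ i, y i‖ ^ 2 + ∑ i : Fin m, ‖x i.castSucc - x (Fin.last m)‖ ^ 2
      ≤ 2 * (m + 1 : ℝ) * (1 + 1 / γ * (K ^ 2 + (1 + δ) / ρlo ^ 2)) * ∑ i, ‖z - x i‖ ^ 2 := by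
  set S := ∑ i, ‖z - x i‖ ^ 2
  set C := K ^ 2 + (1 + δ) / ρlo ^ 2 with hC
  have hstep (i) : ‖y i - w i‖ ^ 2 ≤ 2 * C * ‖z - x i‖ ^ 2 := by
    rcases Finset.mem_union.1 (hBF ▸ Finset.mem_univ i) with hi | hi
    · refine (norm_sub_sq_le_of_backward_step hρlo (hρ i) (hback i hi) (herr i hi)).trans ?_
      gcongr
      exact le_add_of_nonneg_left (sq_nonneg K)
    · obtain ⟨hx, hy⟩ := hforw i hi
      rw [hy]
      refine (norm_sub_sq_le_of_forward_step hρlo (hρ i) (hLip i hi _ _) hx).trans ?_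
      rw [hC]
      gcongr
      exact le_add_of_nonneg_right hδ
  have hdual : ‖∑ i, y i‖ ^ 2 ≤ (m + 1) * (2 * C * S) := by
    simpa using norm_sum_sq_le_of_norm_sub_sq_le hw fun i _ => hstep i
  have hprimal : ∑ i : Fin m, ‖x i.castSucc - x (Fin.last m)‖ ^ 2 ≤ m * (2 * S) := by
    simpa using Finset.sum_le_card_nsmul Finset.univ _ _ fun (i : Fin m) _ =>
      norm_sub_sq_le_two_mul_sum (Finset.mem_univ _) (Finset.mem_univ _) i.castSucc_ne_last z x
  calc _ ≤ 1 / γ * ((m + 1) * (2 * C * S)) + (m + 1) * (2 * S) := by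
        gcongr
        exact hprimal.trans (by gcongr; exact le_add_of_nonneg_right zero_le_one)
    _ = 2 * (m + 1) * (1 + 1 / γ * C) * S := by ring

/-- Bound on the squared γ-weighted norm of the gradient of the separator
function produced by one iteration of projective splitting:
`γ⁻¹‖y₁+⋯+yₙ‖² + Σ_{i<n}‖xᵢ−xₙ‖² ≤ ξ₁ Σᵢ ‖z−xᵢ‖²` with
`ξ₁ = 2n[1 + 2γ⁻¹(L̄²|F| + ρ̲⁻²(1+δ))]`.  Here `n = m+1 ≥ 1`. -/
theorem gradient_bound_one_iteration
    {H : Type*} [NormedAddCommGroup H] [InnerProductSpace ℝ H] [CompleteSpace H]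
    (m : ℕ) (γ : ℝ) (hγ : 0 < γ)
    (B F : Finset (Fin (m+1))) (hBF : Disjoint B F) (hBFunion : B ∪ F = Finset.univ)
    (T : Fin (m+1) → H → Set H) (Tf : Fin (m+1) → H → H) (L : Fin (m+1) → ℝ)
    (hTmono : ∀ i ∈ B, ∀ x x' y y' : H, y ∈ T i x → y' ∈ T i x' → 0 ≤ ⟪x - x', y - y'⟫)
    (hTfmono : ∀ i ∈ F, ∀ u v : H, 0 ≤ ⟪u - v, Tf i u - Tf i v⟫)
    (hL0 : ∀ i ∈ F, 0 ≤ L i)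
    (hLip : ∀ i ∈ F, ∀ u v : H, ‖Tf i u - Tf i v‖ ≤ L i * ‖u - v‖)
    (z : H) (w : Fin m → H) (wfull : Fin (m+1) → H)
    (hwfull : wfull = Fin.snoc w (-(∑ i : Fin m, w i)))
    (x y : Fin (m+1) → H) (ρ : Fin (m+1) → ℝ) (e : Fin (m+1) → H)
    (σ δ : ℝ) (hσ0 : 0 ≤ σ) (hσ1 : σ < 1) (hδ : 0 ≤ δ)
    (ρlo ρhi : ℝ) (ρbar : Fin (m+1) → ℝ)
    (hρlo : 0 < ρlo) (hρge : ∀ i, ρlo ≤ ρ i)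
    (hρB : ∀ i ∈ B, ρ i ≤ ρhi)
    (hρF : ∀ i ∈ F, ρ i ≤ ρbar i ∧ ρbar i * L i < 1)
    (hback : ∀ i ∈ B, y i ∈ T i (x i) ∧ x i + ρ i • y i = z + ρ i • wfull i + e i)
    (hforw : ∀ i ∈ F, x i = z - ρ i • (Tf i z - wfull i) ∧ y i = Tf i (x i))
    (herr1 : ∀ i ∈ B, -(σ * ‖z - x i‖ ^ 2) ≤ ⟪z - x i, e i⟫)
    (herr2 : ∀ i ∈ B, ⟪e i, y i - wfull i⟫ ≤ ρ i * σ * ‖y i - wfull i‖ ^ 2)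
    (herr3 : ∀ i ∈ B, ‖e i‖ ^ 2 ≤ δ * ‖z - x i‖ ^ 2)
    (Lbar : ℝ)
    (hLbar : Lbar = Finset.univ.sup' Finset.univ_nonempty (fun i => if i ∈ F then L i else 0))
    (ξ₁ : ℝ)
    (hξ₁ : ξ₁ = 2 * (m+1 : ℝ) *
      (1 + 2 / γ * (Lbar ^ 2 * (F.card : ℝ) + (1 + δ) / ρlo ^ 2))) :
    (1 / γ) * ‖∑ i : Fin (m+1), y i‖ ^ 2
      + ∑ i : Fin m, ‖x i.castSucc - x (Fin.last m)‖ ^ 2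
      ≤ ξ₁ * ∑ i : Fin (m+1), ‖z - x i‖ ^ 2 := by
  have hw : ∑ i, wfull i = 0 := by simp [hwfull, Fin.sum_univ_castSucc]
  have hLip' (i) (hi : i ∈ F) (u v : H) : ‖Tf i u - Tf i v‖ ≤ Lbar * ‖u - v‖ :=
    (hLip i hi u v).trans (by gcongr; exact le_sup'_ite_zero hLbar hi)
  rw [hξ₁]
  refine (gradient_bound_one_iteration_general hγ hBFunion hLip' hw hδ hρlo hρge
    (fun i hi => (hback i hi).2) hforw herr3).trans ?_
  gcongr
  · exact one_le_two
  · exact sq_sup'_ite_zero_le_mul_card hLbar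
end

section
/- Under the hypotheses of one iteration of projective splitting at (z, w₁,…,w_{n−1}), the separator function φ built from the points (x_i, y_i) satisfies φ(z, w₁,…,w_{n−1}) ≥ ξ₂ Σ_{i=1}^{n} ‖z − x_i‖², where ξ₂ = min{(1−σ)ρ̄⁻¹, min_{j∈F}(ρ̄_j⁻¹ − L_j)} > 0. -/
open scoped RealInnerProductSpace

/-!
The separator is the sum over the blocks of `⟪z - xᵢ, yᵢ - wᵢ⟫`, so it suffices to bound each
summand from below by a multiple of `‖z - xᵢ‖²`. A backward step makes `ρᵢ • (yᵢ - wᵢ)` equal to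
`z - xᵢ + eᵢ`; pairing this with `z - xᵢ` gives the factor `(1 - σ) / ρᵢ`. For a forward step, the
same computation with `Tᵢ z` in place of `yᵢ` and no error gives `1 / ρᵢ`, and replacing `Tᵢ z` by
`yᵢ = Tᵢ xᵢ` costs at most `Lᵢ ‖z - xᵢ‖²`.
-/

namespace ProjectiveSplitting

section Constant

variable {ι : Type*}

theorem inf'_mul_sum_le_sum {s : Finset ι} (hs : s.Nonempty) {c a b : ι → ℝ}
    (ha : ∀ i ∈ s, 0 ≤ a i) (hab : ∀ i ∈ s, c i * a i ≤ b i) :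
    s.inf' hs c * ∑ i ∈ s, a i ≤ ∑ i ∈ s, b i := by
  rw [Finset.mul_sum]
  exact Finset.sum_le_sum fun i hi =>
    (mul_le_mul_of_nonneg_right (Finset.inf'_le c hi) (ha i hi)).trans (hab i hi)

/-- The constant `ξ₂` by which the squared residuals `‖z - xᵢ‖²` are weighted in the lower bound for
the separator. Blocks in `B` take a backward step with relative error `σ` and stepsize at most
`ρhi`; every other block takes two forward steps with stepsize at most `ρbar i`. -/
noncomputable def separationConstant [Fintype ι] [Nonempty ι] [DecidableEq ι] (B : Finset ι)
    (σ ρhi : ℝ) (ρbar L : ι → ℝ) : ℝ :=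
  Finset.univ.inf' Finset.univ_nonempty
    fun i => if i ∈ B then (1 - σ) / ρhi else 1 / ρbar i - L i

theorem separationConstant_pos [Fintype ι] [Nonempty ι] [DecidableEq ι] {B : Finset ι}
    {σ ρhi : ℝ} {ρbar L : ι → ℝ} (hσ : σ < 1) (hB : ∀ i ∈ B, 0 < ρhi)
    (hF : ∀ i ∉ B, 0 < ρbar i ∧ ρbar i * L i < 1) :
    0 < separationConstant B σ ρhi ρbar L := by
  refine (Finset.lt_inf'_iff _).2 fun i _ => ?_
  split_ifs with hi
  · exact div_pos (sub_pos.2 hσ) (hB i hi)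
  · obtain ⟨hρbar, hL⟩ := hF i hi
    exact sub_pos.2 ((lt_div_iff₀' hρbar).2 hL)

end Constant

section Step

variable {H : Type*} [NormedAddCommGroup H] [InnerProductSpace ℝ H]

theorem div_mul_norm_sq_le_inner_of_smul_eq_add {u v e : H} {σ ρ ρbar : ℝ} (hσ : σ ≤ 1)
    (hρ : 0 < ρ) (hρbar : ρ ≤ ρbar) (hv : ρ • v = u + e) (he : -(σ * ‖u‖ ^ 2) ≤ ⟪u, e⟫) :
    (1 - σ) / ρbar * ‖u‖ ^ 2 ≤ ⟪u, v⟫ := by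
  have inner_eq : ρ * ⟪u, v⟫ = ‖u‖ ^ 2 + ⟪u, e⟫ := by
    rw [← real_inner_smul_right, hv, inner_add_right, real_inner_self_eq_norm_sq]
  calc (1 - σ) / ρbar * ‖u‖ ^ 2 ≤ (1 - σ) / ρ * ‖u‖ ^ 2 := by
        gcongr
    _ ≤ ⟪u, v⟫ := by
        rw [div_mul_eq_mul_div, div_le_iff₀' hρ, inner_eq]
        linarith

theorem backward_step_le_inner {z w x y e : H} {σ ρ ρbar : ℝ} (hσ : σ ≤ 1)
    (hρ : 0 < ρ) (hρbar : ρ ≤ ρbar) (hstep : x + ρ • y = z + ρ • w + e)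
    (he : -(σ * ‖z - x‖ ^ 2) ≤ ⟪z - x, e⟫) :
    (1 - σ) / ρbar * ‖z - x‖ ^ 2 ≤ ⟪z - x, y - w⟫ := by
  refine div_mul_norm_sq_le_inner_of_smul_eq_add hσ hρ hρbar ?_ he
  rw [smul_sub, eq_sub_of_add_eq' hstep]
  abel

theorem forward_step_le_inner {T : H → H} {z w x : H} {L ρ ρbar : ℝ}
    (hρ : 0 < ρ) (hρbar : ρ ≤ ρbar) (hstep : x = z - ρ • (T z - w))
    (hT : ⟪z - x, T z - T x⟫ ≤ L * ‖z - x‖ ^ 2) :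
    (1 / ρbar - L) * ‖z - x‖ ^ 2 ≤ ⟪z - x, T x - w⟫ := by
  have inner_at_z : 1 / ρbar * ‖z - x‖ ^ 2 ≤ ⟪z - x, T z - w⟫ := by
    have smul_eq : ρ • (T z - w) = z - x + 0 := by rw [hstep]; abel
    simpa only [sub_zero] using
      div_mul_norm_sq_le_inner_of_smul_eq_add zero_le_one hρ hρbar smul_eq (by simp)
  calc (1 / ρbar - L) * ‖z - x‖ ^ 2
      ≤ ⟪z - x, T z - w⟫ - ⟪z - x, T z - T x⟫ := by
        rw [sub_mul]
        exact sub_le_sub inner_at_z hT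
    _ = ⟪z - x, T x - w⟫ := by rw [← inner_sub_right, sub_sub_sub_cancel_left]

theorem inner_le_mul_norm_sq_of_norm_le {u v : H} {L : ℝ} (h : ‖v‖ ≤ L * ‖u‖) :
    ⟪u, v⟫ ≤ L * ‖u‖ ^ 2 :=
  calc ⟪u, v⟫ ≤ ‖u‖ * ‖v‖ := real_inner_le_norm u v
    _ ≤ ‖u‖ * (L * ‖u‖) := by gcongr
    _ = L * ‖u‖ ^ 2 := by ring

end Step

section Separator

variable {H : Type*} [NormedAddCommGroup H] [InnerProductSpace ℝ H]

/-- The separator function of the points `(xᵢ, yᵢ)`, as a function of `z` and of all the dual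
variables `wᵢ`, the last one included. The paper's `φ` is its restriction to `∑ wᵢ = 0`, see
`separator_snoc_neg_sum`. -/
def separator {ι : Type*} [Fintype ι] (x y : ι → H) (z : H) (w : ι → H) : ℝ :=
  ∑ i, ⟪z - x i, y i - w i⟫

theorem separator_snoc_neg_sum {m : ℕ} (x y : Fin (m + 1) → H) (z : H) (w : Fin m → H) :
    separator x y z (Fin.snoc w (-∑ i, w i)) =
      (∑ i : Fin m, ⟪z - x i.castSucc, y i.castSucc - w i⟫)
        + ⟪z - x (Fin.last m), y (Fin.last m) + ∑ i : Fin m, w i⟫ := by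
  simp only [separator, Fin.sum_univ_castSucc, Fin.snoc_castSucc, Fin.snoc_last, sub_neg_eq_add]

end Separator

end ProjectiveSplitting

open ProjectiveSplitting

theorem separator_lower_bound_one_iteration_general
    {H : Type*} [NormedAddCommGroup H] [InnerProductSpace ℝ H]
    {ι : Type*} [Fintype ι] [Nonempty ι] [DecidableEq ι]
    {B F : Finset ι} (hBF : B ∪ F = Finset.univ) {T : ι → H → H} {L : ι → ℝ}
    {z : H} {w x y e : ι → H} {σ ρhi : ℝ} {ρ ρbar : ι → ℝ} (hσ : σ < 1) (hρ : ∀ i, 0 < ρ i)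
    (hρB : ∀ i ∈ B, ρ i ≤ ρhi) (hρF : ∀ i ∈ F, ρ i ≤ ρbar i ∧ ρbar i * L i < 1)
    (hback : ∀ i ∈ B, x i + ρ i • y i = z + ρ i • w i + e i)
    (herr : ∀ i ∈ B, -(σ * ‖z - x i‖ ^ 2) ≤ ⟪z - x i, e i⟫)
    (hforw : ∀ i ∈ F, x i = z - ρ i • (T i z - w i) ∧ y i = T i (x i))
    (hT : ∀ i ∈ F, ⟪z - x i, T i z - T i (x i)⟫ ≤ L i * ‖z - x i‖ ^ 2) :
    0 < separationConstant B σ ρhi ρbar L ∧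
      separationConstant B σ ρhi ρbar L * ∑ i, ‖z - x i‖ ^ 2 ≤ separator x y z w := by
  have mem_F : ∀ i ∉ B, i ∈ F := fun i hi =>
    (Finset.mem_union.1 (hBF ▸ Finset.mem_univ i)).resolve_left hi
  constructor
  · exact separationConstant_pos hσ (fun i hi => (hρ i).trans_le (hρB i hi))
      fun i hi => (hρF i (mem_F i hi)).imp_left (hρ i).trans_le
  · refine inf'_mul_sum_le_sum _ (fun i _ => sq_nonneg _) fun i _ => ?_
    split_ifs with hi
    · exact backward_step_le_inner hσ.le (hρ i) (hρB i hi) (hback i hi) (herr i hi)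
    · obtain ⟨hx, hy⟩ := hforw i (mem_F i hi)
      rw [hy]
      exact forward_step_le_inner (hρ i) (hρF i (mem_F i hi)).1 hx (hT i (mem_F i hi))

/-- Lower bound for the separator function at the current point of one
iteration of projective splitting: `φ(z, w₁,…,w_{n−1}) ≥ ξ₂ Σᵢ ‖z − xᵢ‖²` with
`ξ₂ = min{(1−σ)ρ̄⁻¹, min_{j∈F}(ρ̄ⱼ⁻¹ − Lⱼ)} > 0`.  Here `n = m+1 ≥ 1`. -/
theorem separator_lower_bound_one_iteration
    {H : Type*} [NormedAddCommGroup H] [InnerProductSpace ℝ H] [CompleteSpace H]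
    (m : ℕ) (γ : ℝ) (hγ : 0 < γ)
    (B F : Finset (Fin (m+1))) (hBF : Disjoint B F) (hBFunion : B ∪ F = Finset.univ)
    (T : Fin (m+1) → H → Set H) (Tf : Fin (m+1) → H → H) (L : Fin (m+1) → ℝ)
    (hTmono : ∀ i ∈ B, ∀ x x' y y' : H, y ∈ T i x → y' ∈ T i x' → 0 ≤ ⟪x - x', y - y'⟫)
    (hTfmono : ∀ i ∈ F, ∀ u v : H, 0 ≤ ⟪u - v, Tf i u - Tf i v⟫)
    (hL0 : ∀ i ∈ F, 0 ≤ L i)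
    (hLip : ∀ i ∈ F, ∀ u v : H, ‖Tf i u - Tf i v‖ ≤ L i * ‖u - v‖)
    (z : H) (w : Fin m → H) (wfull : Fin (m+1) → H)
    (hwfull : wfull = Fin.snoc w (-(∑ i : Fin m, w i)))
    (x y : Fin (m+1) → H) (ρ : Fin (m+1) → ℝ) (e : Fin (m+1) → H)
    (σ δ : ℝ) (hσ0 : 0 ≤ σ) (hσ1 : σ < 1) (hδ : 0 ≤ δ)
    (ρlo ρhi : ℝ) (ρbar : Fin (m+1) → ℝ)
    (hρlo : 0 < ρlo) (hρge : ∀ i, ρlo ≤ ρ i)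
    (hρB : ∀ i ∈ B, ρ i ≤ ρhi)
    (hρF : ∀ i ∈ F, ρ i ≤ ρbar i ∧ ρbar i * L i < 1)
    (hback : ∀ i ∈ B, y i ∈ T i (x i) ∧ x i + ρ i • y i = z + ρ i • wfull i + e i)
    (hforw : ∀ i ∈ F, x i = z - ρ i • (Tf i z - wfull i) ∧ y i = Tf i (x i))
    (herr1 : ∀ i ∈ B, -(σ * ‖z - x i‖ ^ 2) ≤ ⟪z - x i, e i⟫)
    (herr2 : ∀ i ∈ B, ⟪e i, y i - wfull i⟫ ≤ ρ i * σ * ‖y i - wfull i‖ ^ 2)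
    (herr3 : ∀ i ∈ B, ‖e i‖ ^ 2 ≤ δ * ‖z - x i‖ ^ 2)
    (φval : ℝ)
    (hφval : φval = (∑ i : Fin m, ⟪z - x i.castSucc, y i.castSucc - w i⟫)
      + ⟪z - x (Fin.last m), y (Fin.last m) + ∑ i : Fin m, w i⟫)
    (ξ₂ : ℝ)
    (hξ₂ : ξ₂ = Finset.univ.inf' Finset.univ_nonempty
      (fun i => if i ∈ B then (1 - σ) / ρhi else 1 / ρbar i - L i)) :
    0 < ξ₂ ∧ ξ₂ * ∑ i : Fin (m+1), ‖z - x i‖ ^ 2 ≤ φval := by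
  rw [hφval, hξ₂, ← separator_snoc_neg_sum, ← hwfull]
  exact separator_lower_bound_one_iteration_general hBFunion hσ1 (fun i => hρlo.trans_le (hρge i))
    hρB hρF (fun i hi => (hback i hi).2) herr1 hforw
    fun i hi => inner_le_mul_norm_sq_of_norm_le (hLip i hi z (x i))
end

section
/- Let H be a real Hilbert space, n ≥ 1, k ≥ 1, and α̲ > 0. For t = 1,…,k let α_t ≥ α̲ and let points x_i^t ∈ H (i = 1,…,n) and w_i^t ∈ H (i = 1,…,n−1, t = 1,…,k+1) satisfy the dual update w_i^{t+1} = w_i^t − α_t (x_i^t − x_n^t) for every i = 1,…,n−1 and t = 1,…,k. Suppose there are vectors w_i* ∈ H and a constant C ≥ 0 with ‖w_i^t − w_i*‖ ≤ C for all i = 1,…,n−1 and t = 1,…,k+1. Define the ergodic iterates x̄_i^k = (Σ_{t=1}^{k} α_t x_i^t)/(Σ_{t=1}^{k} α_t). Then for all i, l ∈ {1,…,n}, ‖x̄_i^k − x̄_l^k‖ ≤ 4C/(α̲ k). -/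
open scoped RealInnerProductSpace

/-!
Summing the dual updates telescopes: `∑ t, α t • (x t i - x t n) = w 1 i - w (k + 1) i`. The right
side is the difference of two points of a ball of radius `C`, so dividing by `∑ t, α t ≥ α̲ k` puts
every ergodic iterate within `2 C / (α̲ k)` of the last one.
-/

open Finset in
theorem mul_le_sum_Icc {R : Type*} [Semiring R] [PartialOrder R] [IsOrderedAddMonoid R]
    {α : ℕ → R} {a : R} {k : ℕ} (hα : ∀ t, 1 ≤ t → t ≤ k → a ≤ α t) :
    a * k ≤ ∑ t ∈ Icc 1 k, α t := by
  have h : #(Icc 1 k) • a ≤ ∑ t ∈ Icc 1 k, α t := card_nsmul_le_sum _ _ _ fun t ht ↦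
    hα t (mem_Icc.mp ht).1 (mem_Icc.mp ht).2
  rwa [Nat.card_Icc, Nat.add_sub_cancel, nsmul_eq_mul, Nat.cast_comm] at h

open Finset in
theorem sum_Icc_eq_sub_of_succ_eq_sub {G : Type*} [AddCommGroup G] {w d : ℕ → G} {a b : ℕ}
    (hab : a ≤ b + 1) (hw : ∀ t, a ≤ t → t ≤ b → w (t + 1) = w t - d t) :
    ∑ t ∈ Icc a b, d t = w a - w (b + 1) := by
  have hd : ∀ t ∈ Icc a b, d t = -(w (t + 1) - w t) := fun t ht ↦ by
    rw [hw t (mem_Icc.mp ht).1 (mem_Icc.mp ht).2, neg_sub, sub_sub_cancel]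
  rw [sum_congr rfl hd, sum_neg_distrib, ← Ico_add_one_right_eq_Icc, sum_Ico_sub w hab, neg_sub]

theorem centerMass_sub {R E ι : Type*} [Field R] [AddCommGroup E] [Module R E]
    (s : Finset ι) (w : ι → R) (x y : ι → E) :
    s.centerMass w (fun i ↦ x i - y i) = s.centerMass w x - s.centerMass w y := by
  simp only [Finset.centerMass, smul_sub, Finset.sum_sub_distrib]

section SeminormedAddCommGroup

variable {E : Type*} [SeminormedAddCommGroup E]

theorem norm_sub_le_two_mul_of_norm_sub_le {x y c : E} {r : ℝ} (hx : ‖x - c‖ ≤ r)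
    (hy : ‖y - c‖ ≤ r) : ‖x - y‖ ≤ 2 * r :=
  calc
    ‖x - y‖ ≤ ‖x - c‖ + ‖c - y‖ := norm_sub_le_norm_sub_add_norm_sub x c y
    _ = ‖x - c‖ + ‖y - c‖ := by rw [norm_sub_rev c y]
    _ ≤ 2 * r := by linarith

variable [NormedSpace ℝ E]

theorem norm_centerMass_le_div {ι : Type*} {s : Finset ι} {α : ι → ℝ} {z : ι → E} {A B : ℝ}
    (hA : 0 < A) (hα : A ≤ ∑ i ∈ s, α i) (hz : ‖∑ i ∈ s, α i • z i‖ ≤ B) :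
    ‖s.centerMass α z‖ ≤ B / A := by
  rw [Finset.centerMass, norm_smul, norm_inv, Real.norm_of_nonneg (hA.le.trans hα), inv_mul_eq_div]
  exact div_le_div₀ ((norm_nonneg _).trans hz) hz hA hα

theorem norm_centerMass_sub_le_of_dual_update {k : ℕ} {α : ℕ → ℝ} {x y w : ℕ → E} {c : E}
    {A C : ℝ} (hA : 0 < A) (hα : A ≤ ∑ t ∈ Finset.Icc 1 k, α t)
    (hupd : ∀ t, 1 ≤ t → t ≤ k → w (t + 1) = w t - α t • (x t - y t))
    (hfirst : ‖w 1 - c‖ ≤ C) (hlast : ‖w (k + 1) - c‖ ≤ C) :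
    ‖(Finset.Icc 1 k).centerMass α x - (Finset.Icc 1 k).centerMass α y‖ ≤ 2 * C / A := by
  rw [← centerMass_sub]
  refine norm_centerMass_le_div hA hα ?_
  rw [sum_Icc_eq_sub_of_succ_eq_sub (Nat.le_add_left 1 k) hupd]
  exact norm_sub_le_two_mul_of_norm_sub_le hfirst hlast

theorem ergodic_iterates_close_general {m k : ℕ} {α : ℕ → ℝ} {A C : ℝ} (hA : 0 < A)
    (hα : A ≤ ∑ t ∈ Finset.Icc 1 k, α t) {x : ℕ → Fin (m + 1) → E} {w : ℕ → Fin m → E}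
    (hupd : ∀ t, 1 ≤ t → t ≤ k → ∀ i : Fin m,
      w (t + 1) i = w t i - α t • (x t i.castSucc - x t (Fin.last m)))
    {wstar : Fin m → E} (hC : 0 ≤ C) (hfirst : ∀ i, ‖w 1 i - wstar i‖ ≤ C)
    (hlast : ∀ i, ‖w (k + 1) i - wstar i‖ ≤ C) (i l : Fin (m + 1)) :
    ‖(Finset.Icc 1 k).centerMass α (x · i) - (Finset.Icc 1 k).centerMass α (x · l)‖ ≤
      4 * C / A := by
  set xbar : Fin (m + 1) → E := fun j ↦ (Finset.Icc 1 k).centerMass α (x · j)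
  have close_to_last (j : Fin (m + 1)) : ‖xbar j - xbar (Fin.last m)‖ ≤ 2 * C / A := by
    cases j using Fin.lastCases with
    | last =>
      rw [sub_self, norm_zero]
      positivity
    | cast j =>
      exact norm_centerMass_sub_le_of_dual_update (w := (w · j)) hA hα
        (fun t h₁ hk ↦ hupd t h₁ hk j) (hfirst j) (hlast j)
  calc
    ‖xbar i - xbar l‖ ≤ 2 * (2 * C / A) :=
      norm_sub_le_two_mul_of_norm_sub_le (close_to_last i) (close_to_last l)
    _ = 4 * C / A := by ring

end SeminormedAddCommGroup

/-- If the dual variables follow the update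
`wᵢ^{t+1} = wᵢ^t − α_t (xᵢ^t − xₙ^t)` with `α_t ≥ α̲ > 0`, and `‖wᵢ^t − wᵢ*‖ ≤ C` for all
`i` and `t = 1,…,k+1`, then the ergodic iterates
`x̄ᵢ = (Σ_t α_t xᵢ^t)/(Σ_t α_t)` satisfy `‖x̄ᵢ − x̄ₗ‖ ≤ 4C/(α̲ k)` for all
`i, l ∈ {1,…,n}`.  Here `n = m+1 ≥ 1`. -/
theorem ergodic_iterates_close
    {H : Type*} [NormedAddCommGroup H] [InnerProductSpace ℝ H] [CompleteSpace H]
    (m : ℕ) (k : ℕ) (hk : 1 ≤ k)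
    (α : ℕ → ℝ) (αlo : ℝ) (hαlo : 0 < αlo)
    (hα : ∀ t, 1 ≤ t → t ≤ k → αlo ≤ α t)
    (x : ℕ → Fin (m+1) → H) (w : ℕ → Fin m → H)
    (hupd : ∀ t, 1 ≤ t → t ≤ k → ∀ i : Fin m,
      w (t+1) i = w t i - (α t) • (x t i.castSucc - x t (Fin.last m)))
    (wstar : Fin m → H) (C : ℝ) (hC : 0 ≤ C)
    (hbdd : ∀ t, 1 ≤ t → t ≤ k + 1 → ∀ i : Fin m, ‖w t i - wstar i‖ ≤ C)
    (xbar : Fin (m+1) → H)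
    (hxbar : ∀ i, xbar i = (∑ t ∈ Finset.Icc 1 k, α t)⁻¹ •
      ∑ t ∈ Finset.Icc 1 k, α t • x t i) :
    ∀ i l : Fin (m+1), ‖xbar i - xbar l‖ ≤ 4 * C / (αlo * k) := by
  intro i l
  rw [hxbar, hxbar]
  exact ergodic_iterates_close_general (mul_pos hαlo (Nat.cast_pos.mpr hk)) (mul_le_sum_Icc hα) hupd
    hC (hbdd 1 le_rfl (Nat.le_add_left 1 k)) (hbdd (k + 1) (Nat.le_add_left 1 k) le_rfl) i l
end
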